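/- Let (A,m) be a rank-2 multiarrangement with a heavy hyperplane H_0, i.e., m(H_0) ≥ Σ_{L ≠ H_0} m(L). Then (A,m) is free with exponents (m(H_0), |m| − m(H_0)). -/

import Mathlib

open scoped Classical
open MvPolynomial

namespace ArrPaper

variable {K : Type*} [Field K] {ℓ : ℕ}

/-- The coordinate ring `S = K[x₁,…,x_ℓ]`. -/
noncomputable abbrev S (K : Type*) [Field K] (ℓ : ℕ) := MvPolynomial (Fin ℓ) K

/-- The linear form associated to a covector `c`. -/
noncomputable def linForm (c : Fin ℓ → K) : S K ℓ :=
  ∑ i, MvPolynomial.C (c i) * MvPolynomial.X i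

/-- The linear functional associated to a covector. -/
noncomputable def toFunc (c : Fin ℓ → K) : (Fin ℓ → K) →ₗ[K] K :=
  ∑ i, c i • LinearMap.proj i

/-- A (central) hyperplane arrangement, given by a finite set of nonzero,
pairwise non-proportional covectors (defining linear forms). -/
structure Arrangement (K : Type*) [Field K] (ℓ : ℕ) where
  hyps : Finset (Fin ℓ → K)
  ne_zero : ∀ c ∈ hyps, c ≠ 0
  nonparallel : ∀ c ∈ hyps, ∀ c' ∈ hyps, c ≠ c' → ∀ t : K, c' ≠ t • c

/-- Derivations of the polynomial ring `S`. -/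
abbrev Der (K : Type*) [Field K] (ℓ : ℕ) := Derivation K (S K ℓ) (S K ℓ)

/-- `θ` is a logarithmic derivation of the multiarrangement `(A, m)`, i.e.
`θ(α_H) ∈ α_H^{m(H)}·S` for all `H ∈ A`. -/
def IsLogDer (A : Arrangement K ℓ) (m : (Fin ℓ → K) → ℕ) (θ : Der K ℓ) : Prop :=
  ∀ c ∈ A.hyps, (linForm c) ^ (m c) ∣ θ (linForm c)

/-- `θ` is homogeneous of polynomial degree `d`: `θ(α)` is homogeneous of degree `d`
for every linear form `α`. -/
def IsHomogOfDeg (θ : Der K ℓ) (d : ℕ) : Prop :=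
  ∀ c : Fin ℓ → K, (θ (linForm c)).IsHomogeneous d

/-- `θ₁, …, θ_ℓ` form a basis of the `S`-module `D(A,m)`. -/
def IsDerBasis (A : Arrangement K ℓ) (m : (Fin ℓ → K) → ℕ) (θ : Fin ℓ → Der K ℓ) : Prop :=
  (∀ i, IsLogDer A m (θ i)) ∧
  ∀ η : Der K ℓ, IsLogDer A m η → ∃! f : Fin ℓ → S K ℓ, η = ∑ i, f i • θ i

/-- `(A,m)` is free with a homogeneous basis of degrees (exponents) `d`. -/
def IsFreeWithExp (A : Arrangement K ℓ) (m : (Fin ℓ → K) → ℕ) (d : Fin ℓ → ℕ) : Prop :=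
  ∃ θ : Fin ℓ → Der K ℓ, (∀ i, IsHomogOfDeg (θ i) (d i)) ∧ IsDerBasis A m θ

/-- `(A,m)` is a free multiarrangement. -/
def IsFree (A : Arrangement K ℓ) (m : (Fin ℓ → K) → ℕ) : Prop :=
  ∃ d : Fin ℓ → ℕ, IsFreeWithExp A m d

/-- `|m|`, the total multiplicity. -/
def msum (A : Arrangement K ℓ) (m : (Fin ℓ → K) → ℕ) : ℕ := ∑ c ∈ A.hyps, m c

/-- The rank of an arrangement: the dimension of the span of its covectors. -/
noncomputable def rank (A : Arrangement K ℓ) : ℕ :=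
  Module.finrank K (Submodule.span K (A.hyps : Set (Fin ℓ → K)))

/-- `A` is reducible: after a linear change of coordinates it is a product of two
arrangements in complementary (nonzero) subspaces.  In terms of covectors: the
covectors split between two complementary nonzero subspaces of the dual space. -/
def Reducible (A : Arrangement K ℓ) : Prop :=
  ∃ W₁ W₂ : Submodule K (Fin ℓ → K), W₁ ≠ ⊥ ∧ W₂ ≠ ⊥ ∧ W₁ ⊓ W₂ = ⊥ ∧ W₁ ⊔ W₂ = ⊤ ∧
    ∀ c ∈ A.hyps, c ∈ W₁ ∨ c ∈ W₂

/-- The hyperplanes of the localization at a flat; the flat of codimension `r` is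
encoded by the `r`-dimensional subspace `U` of the dual space spanned by the
covectors of the hyperplanes containing it. -/
noncomputable def locHyps (A : Arrangement K ℓ) (U : Submodule K (Fin ℓ → K)) :
    Finset (Fin ℓ → K) :=
  A.hyps.filter (· ∈ U)

/-- `U` encodes a flat of `A` of codimension `r` (an element of `L_r(A)`). -/
def IsFlatOfRank (A : Arrangement K ℓ) (U : Submodule K (Fin ℓ → K)) (r : ℕ) : Prop :=
  Module.finrank K U = r ∧ Submodule.span K (locHyps A U : Set (Fin ℓ → K)) = U

/-- The localization `A_X` of `A` at the flat encoded by `U`. -/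
noncomputable def localize (A : Arrangement K ℓ) (U : Submodule K (Fin ℓ → K)) :
    Arrangement K ℓ where
  hyps := locHyps A U
  ne_zero := fun c hc => A.ne_zero c (Finset.mem_filter.mp hc).1
  nonparallel := fun c hc c' hc' =>
    A.nonparallel c (Finset.mem_filter.mp hc).1 c' (Finset.mem_filter.mp hc').1

/-- `H₀` (given by covector `c₀`) is a heavy hyperplane of `(A,m)`. -/
def IsHeavy (A : Arrangement K ℓ) (m : (Fin ℓ → K) → ℕ) (c₀ : Fin ℓ → K) : Prop :=
  c₀ ∈ A.hyps ∧ (∑ c ∈ A.hyps.erase c₀, m c) ≤ m c₀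

/-- `H₀` (given by covector `c₀`) is a locally heavy hyperplane of `(A,m)`. -/
def IsLocallyHeavy (A : Arrangement K ℓ) (m : (Fin ℓ → K) → ℕ) (c₀ : Fin ℓ → K) : Prop :=
  c₀ ∈ A.hyps ∧ ∀ U : Submodule K (Fin ℓ → K), IsFlatOfRank A U 2 → c₀ ∈ U →
    3 ≤ (locHyps A U).card → (∑ c ∈ (locHyps A U).erase c₀, m c) ≤ m c₀

/-- `b` is the second Betti number of the rank-2 localization of `(A,m)` at `U`:
the product of the nonzero exponents of this free rank-2 multiarrangement. -/
def IsLocalB2 (A : Arrangement K ℓ) (m : (Fin ℓ → K) → ℕ)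
    (U : Submodule K (Fin ℓ → K)) (b : ℕ) : Prop :=
  ∃ d : Fin ℓ → ℕ, IsFreeWithExp (localize A U) m d ∧
    b = ∏ i ∈ Finset.univ.filter (fun i => d i ≠ 0), d i

/-- `b` is the second Betti number `b₂(A,m)` of the multiarrangement `(A,m)`. -/
def IsB2 (A : Arrangement K ℓ) (m : (Fin ℓ → K) → ℕ) (b : ℕ) : Prop :=
  ∃ bloc : Submodule K (Fin ℓ → K) → ℕ,
    (∀ U, IsFlatOfRank A U 2 → IsLocalB2 A m U (bloc U)) ∧
    b = ∑ᶠ U ∈ {U : Submodule K (Fin ℓ → K) | IsFlatOfRank A U 2}, bloc U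

/-- The second Betti number of a simple arrangement:
`b₂(A) = Σ_{X ∈ L₂(A)} (|A_X| - 1)`. -/
noncomputable def b2Simple (A : Arrangement K ℓ) : ℕ :=
  ∑ᶠ U ∈ {U : Submodule K (Fin ℓ → K) | IsFlatOfRank A U 2}, ((locHyps A U).card - 1)

/-- The Euler–Ziegler multiplicity of the restricted hyperplane `H₀ ∩ ker(c)` of
`A^{H₀}`: `m^{H₀}(X) = |m_X| - m(H₀)`. -/
noncomputable def EZmult (A : Arrangement K ℓ) (m : (Fin ℓ → K) → ℕ)
    (c₀ c : Fin ℓ → K) : ℕ :=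
  (∑ c' ∈ A.hyps.filter (· ∈ Submodule.span K ({c₀, c} : Set (Fin ℓ → K))), m c') - m c₀

/-- Two covectors are parallel (define the same hyperplane). -/
def Parallel {n : ℕ} (b b' : Fin n → K) : Prop := ∃ t : K, t ≠ 0 ∧ b' = t • b

/-- The covector on `K^n` obtained by restricting the covector `c` on `K^{n+1}` to the
hyperplane `ker c₀`, transported by the linear isomorphism `e : ker c₀ ≃ K^n`. -/
noncomputable def resCov {n : ℕ} (c₀ : Fin (n+1) → K)
    (e : ↥(LinearMap.ker (toFunc c₀)) ≃ₗ[K] (Fin n → K)) (c : Fin (n+1) → K) :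
    Fin n → K :=
  fun j => toFunc c ((e.symm (Pi.single j 1) : ↥(LinearMap.ker (toFunc c₀))) : Fin (n+1) → K)

/-- `(B, mB)` is (a model, in coordinates, of) the Euler–Ziegler restriction
`(A^{H₀}, m^{H₀})` of `(A,m)` to the hyperplane `H₀ = ker c₀ ∈ A`. -/
def IsEZRes {n : ℕ} (A : Arrangement K (n+1)) (m : (Fin (n+1) → K) → ℕ)
    (c₀ : Fin (n+1) → K) (B : Arrangement K n) (mB : (Fin n → K) → ℕ) : Prop :=
  c₀ ∈ A.hyps ∧
  ∃ e : ↥(LinearMap.ker (toFunc c₀)) ≃ₗ[K] (Fin n → K),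
    (∀ c ∈ A.hyps.erase c₀, ∃ b ∈ B.hyps,
        Parallel b (resCov c₀ e c) ∧ mB b = EZmult A m c₀ c) ∧
    (∀ b ∈ B.hyps, ∃ c ∈ A.hyps.erase c₀, Parallel b (resCov c₀ e c))

/-- A combinatorial equivalence between two arrangements: a bijection between the
hyperplanes inducing an isomorphism of intersection lattices (it preserves the rank
of every subset of hyperplanes). -/
def CombEquiv (A A' : Arrangement K ℓ) : Prop :=
  ∃ φ : (Fin ℓ → K) → (Fin ℓ → K), Set.BijOn φ ↑A.hyps ↑A'.hyps ∧
    ∀ T : Finset (Fin ℓ → K), T ⊆ A.hyps →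
      Module.finrank K (Submodule.span K (T : Set (Fin ℓ → K))) =
      Module.finrank K (Submodule.span K ((T.image φ) : Set (Fin ℓ → K)))

lemma linForm_eq_linearCombination (c : Fin ℓ → K) :
    linForm c = Fintype.linearCombination K (X : Fin ℓ → S K ℓ) c := by
  simp [linForm, Fintype.linearCombination_apply, MvPolynomial.smul_eq_C_mul]

lemma linForm_smul (t : K) (c : Fin ℓ → K) : linForm (t • c) = C t * linForm c := by
  simp [linForm_eq_linearCombination, MvPolynomial.smul_eq_C_mul]

lemma linForm_single (j : Fin ℓ) : linForm (Pi.single j (1 : K)) = X j := by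
  simp [linForm_eq_linearCombination]

lemma linForm_injective : Function.Injective (linForm : (Fin ℓ → K) → S K ℓ) := by
  intro c c' h
  funext i
  have h := congrArg (eval (Pi.single i (1 : K))) h
  simpa [linForm, Pi.single_apply] using h

lemma isHomogeneous_linForm (c : Fin ℓ → K) : (linForm c).IsHomogeneous 1 :=
  IsHomogeneous.sum _ _ _ fun i _ => by
    simpa using (isHomogeneous_C (Fin ℓ) (c i)).mul (isHomogeneous_X K i)

lemma linForm_ne_zero {c : Fin ℓ → K} (hc : c ≠ 0) : linForm c ≠ 0 := fun h =>
  hc (linForm_injective (h.trans (by simp [linForm])))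

lemma linForm_irreducible {c : Fin ℓ → K} (hc : c ≠ 0) : Irreducible (linForm c) := by
  have hne := linForm_ne_zero hc
  refine irreducible_of_totalDegree_eq_one ((isHomogeneous_linForm c).totalDegree hne) ?_
  intro t ht
  refine isUnit_iff_ne_zero.mpr ?_
  rintro rfl
  exact hne (MvPolynomial.ext _ _ fun i => by simpa using ht i)

/-- Linear forms with non-proportional covectors have no common factor. -/
lemma linForm_isRelPrime {c c' : Fin ℓ → K} (hc : c ≠ 0) (hc' : c' ≠ 0)
    (h : ∀ t : K, c' ≠ t • c) : IsRelPrime (linForm c) (linForm c') := by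
  rw [(linForm_irreducible hc).isRelPrime_iff_not_dvd]
  intro hdvd
  obtain ⟨u, hu⟩ := ((linForm_irreducible hc).dvd_irreducible_iff_associated
    (linForm_irreducible hc')).mp hdvd
  obtain ⟨t, -, ht⟩ := isUnit_iff_eq_C_of_isReduced.mp u.isUnit
  refine h t (linForm_injective ?_)
  rw [linForm_smul, ← hu, ht, mul_comm]

/-- A polynomial divisible by powers of distinct linear forms of an arrangement is divisible by
their product. -/
lemma prod_linForm_pow_dvd {s : Finset (Fin ℓ → K)} {A : Arrangement K ℓ} (hs : s ⊆ A.hyps)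
    (m : (Fin ℓ → K) → ℕ) {f : S K ℓ} (h : ∀ c ∈ s, linForm c ^ m c ∣ f) :
    ∏ c ∈ s, linForm c ^ m c ∣ f :=
  Finset.prod_dvd_of_isRelPrime (fun c hc c' hc' hne =>
    (linForm_isRelPrime (A.ne_zero c (hs hc)) (A.ne_zero c' (hs hc'))
      (A.nonparallel c (hs hc) c' (hs hc') hne)).pow) h

section Basis

variable {ι : Type*} [Fintype ι] (e : Module.Basis ι K (Fin ℓ → K))

lemma linForm_eq_sum_repr (c : Fin ℓ → K) :
    linForm c = ∑ i, e.repr c i • linForm (e i) := by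
  conv_lhs => rw [← e.sum_repr c]
  simp only [linForm_eq_linearCombination, map_sum, map_smul]

lemma der_linForm (θ : Der K ℓ) (c : Fin ℓ → K) :
    θ (linForm c) = ∑ i, e.repr c i • θ (linForm (e i)) := by
  conv_lhs => rw [linForm_eq_sum_repr e c]
  simp only [map_sum, Derivation.map_smul]

lemma der_ext_basis {θ η : Der K ℓ} (h : ∀ i, θ (linForm (e i)) = η (linForm (e i))) :
    θ = η :=
  MvPolynomial.derivation_ext fun j => by
    rw [← linForm_single, der_linForm e θ, der_linForm e η]
    simp only [h]

/-- The derivation with prescribed values on the linear forms of a basis of covectors. -/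
noncomputable def derOfBasis (v : ι → S K ℓ) : Der K ℓ :=
  mkDerivation K fun j => ∑ i, e.repr (Pi.single j 1) i • v i

lemma derOfBasis_linForm (v : ι → S K ℓ) (c : Fin ℓ → K) :
    derOfBasis e v (linForm c) = ∑ i, e.repr c i • v i := by
  have hrepr : ∀ i, e.repr c i = ∑ j, c j * e.repr (Pi.single j 1) i := fun i => by
    conv_lhs => rw [pi_eq_sum_univ' c]
    simp [Finsupp.finsetSum_apply]
  have hc : linForm c = ∑ j, c j • (X j : S K ℓ) := by
    simp [linForm, MvPolynomial.smul_eq_C_mul]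
  simp only [hc, map_sum, Derivation.map_smul, derOfBasis, mkDerivation_X, hrepr,
    Finset.smul_sum, Finset.sum_smul, mul_smul]
  exact Finset.sum_comm

lemma derOfBasis_linForm_basis (v : ι → S K ℓ) (i : ι) :
    derOfBasis e v (linForm (e i)) = v i := by
  simp [derOfBasis_linForm, Finsupp.single_apply]

lemma derOfBasis_isHomogOfDeg {v : ι → S K ℓ} {n : ℕ} (hv : ∀ i, (v i).IsHomogeneous n) :
    IsHomogOfDeg (derOfBasis e v) n := fun c => by
  rw [derOfBasis_linForm]
  refine IsHomogeneous.sum _ _ _ fun i _ => ?_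
  rw [MvPolynomial.smul_eq_C_mul]
  simpa using (isHomogeneous_C (Fin ℓ) (e.repr c i)).mul (hv i)

end Basis

/-- A rank two arrangement lies in the span of the first two vectors of a basis of covectors
which starts with any given member. -/
lemma exists_adapted_basis (A : Arrangement K ℓ) (hr : rank A = 2) {c₀ : Fin ℓ → K}
    (h₀ : c₀ ∈ A.hyps) :
    ∃ k, ℓ = k + 2 ∧ ∃ e : Module.Basis (Fin (k + 2)) K (Fin ℓ → K), e 0 = c₀ ∧
      ∀ c ∈ A.hyps, ∀ j : Fin k, e.repr c j.succ.succ = 0 := by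
  obtain ⟨c₁, h₁, hne⟩ : ∃ c₁ ∈ A.hyps, c₀ ≠ c₁ := by
    by_contra! hcon
    have hsub : (A.hyps : Set (Fin ℓ → K)) ⊆ {c₀} := fun c hc => (hcon c hc).symm
    have hle := Submodule.finrank_mono (Submodule.span_mono (R := K) hsub)
    rw [finrank_span_singleton (A.ne_zero c₀ h₀)] at hle
    rw [rank] at hr
    omega
  have hli : LinearIndependent K ![c₀, c₁] :=
    (LinearIndependent.pair_iff' (A.ne_zero c₀ h₀)).mpr
      fun t => (A.nonparallel c₀ h₀ c₁ h₁ hne t).symm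
  have hspan : Submodule.span K ({c₀, c₁} : Set (Fin ℓ → K)) =
      Submodule.span K (A.hyps : Set (Fin ℓ → K)) := by
    refine Submodule.eq_of_le_of_finrank_eq (Submodule.span_mono ?_) ?_
    · rintro c (rfl | rfl) <;> assumption
    · have h := finrank_span_eq_card hli
      rw [Matrix.range_cons, Matrix.range_cons, Matrix.range_empty, Set.union_empty,
        Set.singleton_union] at h
      rw [h, Fintype.card_fin]
      exact hr.symm
  let b := Module.Basis.sumExtend hli
  have hfin : Finite (Fin 2 ⊕ Module.Basis.sumExtendIndex hli) := Module.Finite.finite_basis b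
  have : Finite (Module.Basis.sumExtendIndex hli) :=
    Finite.of_injective (Sum.inr (α := Fin 2)) Sum.inr_injective
  let _ := Fintype.ofFinite (Module.Basis.sumExtendIndex hli)
  let k := Fintype.card (Module.Basis.sumExtendIndex hli)
  let σ : Fin 2 ⊕ Module.Basis.sumExtendIndex hli ≃ Fin (k + 2) :=
    ((Equiv.refl _).sumCongr (Fintype.equivFin _)).trans
      (finSumFinEquiv.trans (finCongr (Nat.add_comm 2 k)))
  let e := b.reindex σ
  have hb : ∀ i, b (Sum.inl i) = ![c₀, c₁] i := fun i => by
    simp only [b, Module.Basis.sumExtend, Module.Basis.coe_reindex, Function.comp_apply,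
      Module.Basis.extend_apply_self]
    rfl
  have he0 : e 0 = c₀ := by
    have : σ.symm 0 = Sum.inl 0 := by rw [Equiv.symm_apply_eq]; rfl
    rw [Module.Basis.reindex_apply, this, hb]; rfl
  have he1 : e 1 = c₁ := by
    have : σ.symm 1 = Sum.inl 1 := by
      rw [Equiv.symm_apply_eq]; ext; simp [σ]
    rw [Module.Basis.reindex_apply, this, hb]; rfl
  have hcard : ℓ = k + 2 := by
    have h := Module.finrank_eq_card_basis e
    simpa using h
  refine ⟨k, hcard, e, he0, fun c hc j => ?_⟩
  have hmem : c ∈ Submodule.span K ({c₀, c₁} : Set (Fin ℓ → K)) :=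
    hspan ▸ Submodule.subset_span hc
  obtain ⟨s, t, rfl⟩ := Submodule.mem_span_pair.mp hmem
  rw [← he0, ← he1]
  simp [Fin.ext_iff]

section Interpolation

open Polynomial in
/-- Interpolation of prescribed constants modulo powers of pairwise coprime linear polynomials,
with a bound on the degree. -/
lemma exists_polynomial_interpolation {ι : Type*} (s : Finset ι) (m : ι → ℕ) (a b : ι → K)
    (hdet : ∀ i ∈ s, ∀ j ∈ s, i ≠ j → a i * b j - a j * b i ≠ 0)
    (hb : ∀ i ∈ s, b i ≠ 0) {N : ℕ} (hN : ∑ i ∈ s, m i ≤ N) :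
    ∃ g : K[X], g.natDegree ≤ N ∧ ∀ i ∈ s,
      (Polynomial.C (a i) + Polynomial.C (b i) * Polynomial.X) ^ m i ∣
        Polynomial.C (a i) + Polynomial.C (b i) * g := by
  set p : ι → K[X] := fun i => Polynomial.C (a i) + Polynomial.C (b i) * Polynomial.X with hp
  have hcop : ∀ i ∈ s, ∀ j ∈ s, i ≠ j → IsCoprime (p i ^ m i) (p j ^ m j) := by
    intro i hi j hj hij
    refine IsCoprime.pow ⟨Polynomial.C (b j / (a i * b j - a j * b i)),
      Polynomial.C (-b i / (a i * b j - a j * b i)), ?_⟩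
    have h1 : b j / (a i * b j - a j * b i) * a i + -b i / (a i * b j - a j * b i) * a j = 1 := by
      have := hdet i hi j hj hij
      rw [div_mul_eq_mul_div, div_mul_eq_mul_div, ← add_div, div_eq_one_iff_eq this]
      ring
    have h2 : b j / (a i * b j - a j * b i) * b i + -b i / (a i * b j - a j * b i) * b j = 0 := by
      ring
    calc _ = Polynomial.C (b j / (a i * b j - a j * b i) * a i +
              -b i / (a i * b j - a j * b i) * a j) +
            Polynomial.C (b j / (a i * b j - a j * b i) * b i +
              -b i / (a i * b j - a j * b i) * b j) * Polynomial.X := by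
          simp only [hp, map_add, map_mul]; ring
      _ = 1 := by rw [h1, h2]; simp
  obtain ⟨g, hg⟩ := Ideal.exists_forall_sub_mem_ideal
    (I := fun i : s => Ideal.span {p i ^ m i})
    (fun i j hij => (Ideal.isCoprime_span_singleton_iff _ _).mpr
      (hcop i i.2 j j.2 fun h => hij (Subtype.ext h)))
    (fun i => Polynomial.C (-(a i / b i)))
  have hdeg : ∀ i ∈ s, (p i).natDegree = 1 := fun i hi => by
    rw [hp]; simpa [add_comm] using Polynomial.natDegree_linear (b := a i) (hb i hi)
  have hne : ∀ i ∈ s, p i ≠ 0 := fun i hi h => by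
    simpa [h] using hdeg i hi
  set Q := ∏ i ∈ s, p i ^ m i with hQ
  have hQ0 : Q ≠ 0 := Finset.prod_ne_zero_iff.mpr fun i hi => pow_ne_zero _ (hne i hi)
  have hQdeg : Q.natDegree = ∑ i ∈ s, m i := by
    rw [hQ, Polynomial.natDegree_prod _ _ fun i hi => pow_ne_zero _ (hne i hi)]
    refine Finset.sum_congr rfl fun i hi => ?_
    rw [Polynomial.natDegree_pow, hdeg i hi, mul_one]
  refine ⟨g % Q, ?_, fun i hi => ?_⟩
  · exact (Polynomial.natDegree_le_natDegree
      (Polynomial.degree_mod_lt g hQ0).le).trans (hQdeg.trans_le hN)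
  · have h1 : p i ^ m i ∣ g - Polynomial.C (-(a i / b i)) :=
      Ideal.mem_span_singleton.mp (hg ⟨i, hi⟩)
    have h2 : p i ^ m i ∣ Q * (g / Q) :=
      (Finset.dvd_prod_of_mem (fun i => p i ^ m i) hi).mul_right _
    have h3 : Polynomial.C (a i) + Polynomial.C (b i) * (g % Q) =
        Polynomial.C (b i) * (g - Polynomial.C (-(a i / b i)) - Q * (g / Q)) := by
      have ha : Polynomial.C (a i) = Polynomial.C (b i) * Polynomial.C (a i / b i) := by
        rw [← Polynomial.C_mul, mul_div_cancel₀ _ (hb i hi)]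
      have hdm := EuclideanDomain.div_add_mod g Q
      rw [ha, map_neg]
      linear_combination Polynomial.C (b i) * hdm
    rw [h3]
    exact (dvd_sub h1 h2).mul_left _

open Polynomial in
/-- Homogenization preserves divisibility by powers of a linear polynomial. -/
lemma homogenize_linear_pow_dvd {a b : K} (hb : b ≠ 0) {n N : ℕ} {f : K[X]}
    (hf : f.natDegree ≤ N)
    (h : (Polynomial.C a + Polynomial.C b * Polynomial.X) ^ n ∣ f) :
    (MvPolynomial.C a * MvPolynomial.X 1 + MvPolynomial.C b * MvPolynomial.X 0) ^ n ∣
      f.homogenize N := by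
  obtain ⟨q, rfl⟩ := h
  rcases eq_or_ne q 0 with rfl | hq
  · simp
  set p := Polynomial.C a + Polynomial.C b * Polynomial.X with hp
  have hpdeg : p.natDegree = 1 := by
    rw [hp]; simpa [add_comm] using Polynomial.natDegree_linear (b := a) hb
  have hp0 : p ≠ 0 := fun h => by simp [h] at hpdeg
  have hpow : (p ^ n).natDegree = n := by rw [Polynomial.natDegree_pow, hpdeg, mul_one]
  rw [Polynomial.natDegree_mul (pow_ne_zero _ hp0) hq, hpow] at hf
  obtain ⟨r, rfl⟩ : ∃ r, N = n + r := ⟨N - n, by omega⟩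
  have hhom : (p ^ n).homogenize n =
      (MvPolynomial.C a * MvPolynomial.X 1 + MvPolynomial.C b * MvPolynomial.X 0) ^ n := by
    have h := homogenize_finsetProd (s := Finset.range n) (p := fun _ => p) (n := fun _ => 1)
      (fun _ _ => hpdeg.le)
    simpa [hp] using h
  rw [homogenize_mul _ _ hpow.le (by omega), hhom]
  exact dvd_mul_right _ _

end Interpolation

section Adapted

variable {k : ℕ} {A : Arrangement K (k + 2)} {m : (Fin (k + 2) → K) → ℕ}
  {e : Module.Basis (Fin (k + 2)) K (Fin (k + 2) → K)}

lemma sum_repr_smul_of_adapted {M : Type*} [AddCommMonoid M] [Module K M]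
    {c : Fin (k + 2) → K} (hc : ∀ j : Fin k, e.repr c j.succ.succ = 0)
    (v : Fin (k + 2) → M) :
    ∑ i, e.repr c i • v i = e.repr c 0 • v 0 + e.repr c 1 • v 1 := by
  simp [Fin.sum_univ_succ, hc]

lemma linForm_eq_of_adapted {c : Fin (k + 2) → K}
    (hc : ∀ j : Fin k, e.repr c j.succ.succ = 0) :
    linForm c = C (e.repr c 0) * linForm (e 0) + C (e.repr c 1) * linForm (e 1) := by
  rw [linForm_eq_sum_repr e, sum_repr_smul_of_adapted hc, MvPolynomial.smul_eq_C_mul,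
    MvPolynomial.smul_eq_C_mul]

lemma repr_det_ne_zero (hrepr : ∀ c ∈ A.hyps, ∀ j : Fin k, e.repr c j.succ.succ = 0)
    {c c' : Fin (k + 2) → K} (hc : c ∈ A.hyps) (hc' : c' ∈ A.hyps) (hne : c ≠ c') :
    e.repr c 0 * e.repr c' 1 - e.repr c' 0 * e.repr c 1 ≠ 0 := by
  intro hdet
  have key : ∀ u w : K, u * e.repr c 0 = w * e.repr c' 0 → u * e.repr c 1 = w * e.repr c' 1 →
      u • c = w • c' := by
    intro u w h0 h1
    refine e.repr.injective (Finsupp.ext fun i => ?_)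
    refine Fin.cases ?_ (Fin.cases ?_ fun j => ?_) i
    · simpa using h0
    · simpa using h1
    · simp [hrepr c hc, hrepr c' hc']
  have hcancel : ∀ u w : K, w ≠ 0 → u • c ≠ w • c' := fun u w hw h =>
    A.nonparallel c hc c' hc' hne (w⁻¹ * u) (by rw [mul_smul, h, inv_smul_smul₀ hw])
  have h0 : e.repr c 0 = 0 := by
    by_contra h
    exact hcancel (e.repr c' 0) (e.repr c 0) h
      (key _ _ (mul_comm _ _) (by linear_combination -hdet))
  have h1 : e.repr c 1 = 0 := by
    by_contra h
    exact hcancel (e.repr c' 1) (e.repr c 1) h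
      (key _ _ (by linear_combination hdet) (mul_comm _ _))
  refine A.ne_zero c hc ?_
  simpa using key 1 0 (by simp [h0]) (by simp [h1])

lemma repr_one_ne_zero (h₀ : e 0 ∈ A.hyps)
    (hrepr : ∀ c ∈ A.hyps, ∀ j : Fin k, e.repr c j.succ.succ = 0)
    {c : Fin (k + 2) → K} (hc : c ∈ A.hyps.erase (e 0)) : e.repr c 1 ≠ 0 := by
  have h := repr_det_ne_zero hrepr h₀ (Finset.mem_of_mem_erase hc) (Finset.ne_of_mem_erase hc).symm
  simpa using h

lemma exists_homogeneous_interpolation (h₀ : e 0 ∈ A.hyps)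
    (hrepr : ∀ c ∈ A.hyps, ∀ j : Fin k, e.repr c j.succ.succ = 0)
    {N : ℕ} (hN : ∑ c ∈ A.hyps.erase (e 0), m c ≤ N) :
    ∃ G : S K (k + 2), G.IsHomogeneous N ∧ ∀ c ∈ A.hyps.erase (e 0),
      linForm c ^ m c ∣ C (e.repr c 0) * linForm (e 0) ^ N + C (e.repr c 1) * G := by
  obtain ⟨g, hg, hdvd⟩ := exists_polynomial_interpolation (A.hyps.erase (e 0)) m
    (fun c => e.repr c 0) (fun c => e.repr c 1)
    (fun c hc c' hc' => repr_det_ne_zero hrepr (Finset.mem_of_mem_erase hc)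
      (Finset.mem_of_mem_erase hc'))
    (fun c hc => repr_one_ne_zero h₀ hrepr hc) hN
  refine ⟨aeval ![linForm (e 1), linForm (e 0)] (g.homogenize N), ?_, fun c hc => ?_⟩
  · have h := (Polynomial.isHomogeneous_homogenize (n := N) g).aeval
      ![linForm (e 1), linForm (e 0)] (n := 1)
      (fun i => by fin_cases i <;> exact isHomogeneous_linForm _)
    simpa using h
  · have hdeg : (Polynomial.C (e.repr c 0) + Polynomial.C (e.repr c 1) * g).natDegree ≤ N :=
      (Polynomial.natDegree_add_le _ _).trans (max_le (by simp)
        ((Polynomial.natDegree_C_mul_le _ _).trans hg))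
    have h := map_dvd (aeval ![linForm (e 1), linForm (e 0)]) (homogenize_linear_pow_dvd
      (repr_one_ne_zero h₀ hrepr hc) hdeg (hdvd c hc))
    rw [linForm_eq_of_adapted (hrepr c (Finset.mem_of_mem_erase hc))]
    simpa using h

/-- In coordinates `x, y, z₁, …` dual to an adapted basis, the derivations
`x ^ m(x) ∂x + G ∂y`, `P ∂y`, `∂z₁`, … form a basis, where `P` is the product of the powers of
the linear forms other than `x`. -/
lemma isFreeWithExp_of_adapted_basis (h₀ : e 0 ∈ A.hyps)
    (hrepr : ∀ c ∈ A.hyps, ∀ j : Fin k, e.repr c j.succ.succ = 0)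
    {G : S K (k + 2)} (hG : G.IsHomogeneous (m (e 0)))
    (hGdvd : ∀ c ∈ A.hyps.erase (e 0),
      linForm c ^ m c ∣ C (e.repr c 0) * linForm (e 0) ^ m (e 0) + C (e.repr c 1) * G) :
    IsFreeWithExp A m
      (Fin.cons (m (e 0)) (Fin.cons (∑ c ∈ A.hyps.erase (e 0), m c) fun _ : Fin k => 0)) := by
  set x := linForm (e 0)
  set P := ∏ c ∈ A.hyps.erase (e 0), linForm c ^ m c
  have hsub : A.hyps.erase (e 0) ⊆ A.hyps := Finset.erase_subset _ _
  have hx0 : x ^ m (e 0) ≠ 0 := pow_ne_zero _ (linForm_ne_zero (e.ne_zero 0))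
  have hP0 : P ≠ 0 := Finset.prod_ne_zero_iff.mpr fun c hc =>
    pow_ne_zero _ (linForm_ne_zero (A.ne_zero c (hsub hc)))
  have hPhom : P.IsHomogeneous (∑ c ∈ A.hyps.erase (e 0), m c) :=
    IsHomogeneous.prod _ _ _ fun c _ => by simpa using (isHomogeneous_linForm c).pow (m c)
  -- the values of the basis elements on the linear forms of `e`
  let v : Fin (k + 2) → Fin (k + 2) → S K (k + 2) :=
    Fin.cons (Fin.cons (x ^ m (e 0)) (Fin.cons G fun _ => 0))
      (Fin.cons (Fin.cons 0 (Fin.cons P fun _ => 0)) fun j : Fin k => Pi.single j.succ.succ 1)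
  have hval : ∀ i j, derOfBasis e (v i) (linForm (e j)) = v i j := fun i j =>
    derOfBasis_linForm_basis e _ _
  have hone : ∀ j : Fin k, (1 : Fin (k + 2)) ≠ j.succ.succ := fun j => by simp [Fin.ext_iff]
  have hcoord : ∀ (f : Fin (k + 2) → S K (k + 2)) (j : Fin (k + 2)),
      (∑ i, f i • derOfBasis e (v i)) (linForm (e j)) =
        (Fin.cons (f 0 * x ^ m (e 0)) (Fin.cons (f 0 * G + f 1 * P)
          fun j : Fin k => f j.succ.succ) : Fin (k + 2) → S K (k + 2)) j := by
    intro f j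
    have hsum : (∑ i, f i • derOfBasis e (v i)) (linForm (e j)) = ∑ i, f i * v i j := by
      rw [← Derivation.coeFnAddMonoidHom_apply, map_sum, Finset.sum_apply]
      exact Finset.sum_congr rfl fun i _ => congrArg (f i * ·) (hval i j)
    rw [hsum]
    refine Fin.cases ?_ (Fin.cases ?_ fun j => ?_) j
    · simp [Fin.sum_univ_succ, v]
    · simp [Fin.sum_univ_succ, v, hone]
    · simp [Fin.sum_univ_succ, v, Pi.single_apply]
  have hlog : ∀ i, IsLogDer A m (derOfBasis e (v i)) := by
    intro i c hc
    rw [derOfBasis_linForm, sum_repr_smul_of_adapted (hrepr c hc)]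
    rcases eq_or_ne c (e 0) with rfl | hne
    · refine Fin.cases ?_ (Fin.cases ?_ fun j => ?_) i <;> simp [v, x]
    · have hc' := Finset.mem_erase.mpr ⟨hne, hc⟩
      have hPd : linForm c ^ m c ∣ P :=
        Finset.dvd_prod_of_mem (fun c => linForm c ^ m c) hc'
      refine Fin.cases ?_ (Fin.cases ?_ fun j => ?_) i
      · simpa [v, MvPolynomial.smul_eq_C_mul] using hGdvd c hc'
      · simpa [v, MvPolynomial.smul_eq_C_mul] using hPd.mul_left _
      · simp [v, hone]
  refine ⟨fun i => derOfBasis e (v i), fun i => derOfBasis_isHomogOfDeg e fun j => ?_,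
    hlog, fun η hη => ?_⟩
  · refine Fin.cases ?_ (Fin.cases ?_ fun i => ?_) i
    · refine Fin.cases ?_ (Fin.cases ?_ fun j => ?_) j
      · simpa [v] using (isHomogeneous_linForm (e 0)).pow (m (e 0))
      · simpa [v] using hG
      · simpa [v] using isHomogeneous_zero _ _ _
    · refine Fin.cases ?_ (Fin.cases ?_ fun j => ?_) j
      · simpa [v] using isHomogeneous_zero _ _ _
      · simpa [v] using hPhom
      · simpa [v] using isHomogeneous_zero _ _ _
    · simp only [v, Fin.cons_succ, Pi.single_apply]
      split_ifs
      · exact isHomogeneous_one _ _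
      · exact isHomogeneous_zero _ _ _
  · obtain ⟨f₀, hf₀⟩ := hη (e 0) h₀
    have hPdvd : P ∣ η (linForm (e 1)) - f₀ * G := by
      refine prod_linForm_pow_dvd hsub m fun c hc => ?_
      have h1 := hη c (hsub hc)
      rw [der_linForm e, sum_repr_smul_of_adapted (hrepr c (hsub hc)), hf₀] at h1
      have h2 := dvd_sub h1 ((hGdvd c hc).mul_left f₀)
      have hb := repr_one_ne_zero h₀ hrepr hc
      have hu : IsUnit (C (e.repr c 1) : S K (k + 2)) := (isUnit_iff_ne_zero.mpr hb).map C
      refine hu.dvd_mul_left.mp ?_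
      convert h2 using 1
      simp only [MvPolynomial.smul_eq_C_mul]
      ring
    obtain ⟨f₁, hf₁⟩ := hPdvd
    refine ⟨Fin.cons f₀ (Fin.cons f₁ fun j => η (linForm (e j.succ.succ))), ?_, ?_⟩
    · refine der_ext_basis e fun j => ?_
      rw [hcoord]
      refine Fin.cases ?_ (Fin.cases ?_ fun j => ?_) j
      · simpa [mul_comm] using hf₀
      · simp only [Fin.cons_succ, Fin.cons_zero, Fin.cons_one, Fin.succ_zero_eq_one]
        linear_combination hf₁
      · simp
    · intro f hf
      have h := fun j => (congrArg (fun θ : Der K (k + 2) => θ (linForm (e j))) hf).trans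
        (hcoord f j)
      have h0 : f 0 = f₀ := by
        refine mul_right_cancel₀ hx0 ?_
        have := h 0
        simp only [Fin.cons_zero] at this
        rw [← this, hf₀, mul_comm]
      have h1 : f 1 = f₁ := by
        refine mul_right_cancel₀ hP0 ?_
        have := h 1
        simp only [Fin.cons_one, Fin.cons_zero] at this
        rw [h0] at this
        linear_combination hf₁ - this
      funext j
      refine Fin.cases ?_ (Fin.cases ?_ fun j => ?_) j
      · simpa using h0
      · simpa using h1
      · simpa using (h j.succ.succ).symm

end Adapted

theorem stmt8 (A : Arrangement K ℓ) (m : (Fin ℓ → K) → ℕ)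
    (hm : ∀ c ∈ A.hyps, 0 < m c) (hr : rank A = 2)
    (c₀ : Fin ℓ → K) (hH : IsHeavy A m c₀) :
    ∃ d : Fin ℓ → ℕ, IsFreeWithExp A m d ∧
      Finset.univ.val.map d
        = m c₀ ::ₘ (msum A m - m c₀) ::ₘ Multiset.replicate (ℓ - 2) 0 := by
  obtain ⟨k, rfl, e, rfl, hrepr⟩ := exists_adapted_basis A hr hH.1
  obtain ⟨G, hG, hGdvd⟩ := exists_homogeneous_interpolation hH.1 hrepr hH.2
  refine ⟨_, isFreeWithExp_of_adapted_basis hH.1 hrepr hG hGdvd, ?_⟩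
  rw [msum, ← Finset.add_sum_erase _ _ hH.1, Nat.add_sub_cancel_left]
  rw [Fin.univ_val_map]
  simp [List.ofFn_succ, List.ofFn_const, ← Multiset.cons_coe, Multiset.coe_replicate]

end ArrPaper
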